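/- The variance of the antithetic single-step residual error converges, as Δt → 0⁺, to (1/2)·Tr[(σᵀ ∇²_x v(t,x) σ)²]; more precisely, there exists a constant C ≥ 0 such that for all Δt ∈ (0,1], |Var(ε(Δt)) − (1/2)·Tr[(σᵀ ∇²_x v(t,x) σ)²]| ≤ C·Δt. -/

import Mathlib

open MeasureTheory ProbabilityTheory Matrix

/-- Law of a random vector in `ℝ^d` whose coordinates are i.i.d. centered Gaussian
with variance `s` (i.e. `N(0, s·I_d)`). -/
noncomputable def gaussPi (d : ℕ) (s : ℝ) : Measure (Fin d → ℝ) :=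
  Measure.pi fun _ => gaussianReal 0 s.toNNReal

/-- Time partial derivative `∂_t v (t, x)`. -/
noncomputable def partialT {d : ℕ} (v : ℝ → (Fin d → ℝ) → ℝ) (t : ℝ) (x : Fin d → ℝ) : ℝ :=
  deriv (fun s => v s x) t

/-- Spatial gradient `∇_x v (t, x)`. -/
noncomputable def spatialGrad {d : ℕ} (v : ℝ → (Fin d → ℝ) → ℝ) (t : ℝ) (x : Fin d → ℝ) :
    Fin d → ℝ :=
  fun i => fderiv ℝ (v t) x (Pi.single i 1)

/-- Spatial Hessian `∇²_x v (t, x)` as a matrix. -/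
noncomputable def spatialHess {d : ℕ} (v : ℝ → (Fin d → ℝ) → ℝ) (t : ℝ) (x : Fin d → ℝ) :
    Matrix (Fin d) (Fin d) ℝ :=
  Matrix.of fun i j =>
    fderiv ℝ (fun y => fderiv ℝ (v t) y (Pi.single j 1)) x (Pi.single i 1)

/-- The antithetic single-step residual error `ε(Δt)` as a function of the Gaussian
increment `η`:
`ε = (v(t+Δt,x⁺) + v(t+Δt,x⁻) − 2v(t,x))/(2Δt) − (∂_t v + ½Tr[σσᵀ∇²v] + μ·∇v)` with
`x⁺ = x + μΔt + ση`, `x⁻ = x + μΔt − ση`. -/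
noncomputable def resErr {d : ℕ} (v : ℝ → (Fin d → ℝ) → ℝ) (μv : Fin d → ℝ)
    (σ : Matrix (Fin d) (Fin d) ℝ) (t : ℝ) (x : Fin d → ℝ) (Δt : ℝ) (η : Fin d → ℝ) : ℝ :=
  (v (t + Δt) (x + Δt • μv + σ.mulVec η) + v (t + Δt) (x + Δt • μv - σ.mulVec η) - 2 * v t x)
      / (2 * Δt)
    - (partialT v t x + (1 / 2) * (σ * σᵀ * spatialHess v t x).trace + μv ⬝ᵥ spatialGrad v t x)

lemma integral_pow_four_gaussianReal : ∫ y, y ^ 4 ∂gaussianReal 0 1 = 3 := by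
  have hmgf : mgf (fun y : ℝ ↦ y) (gaussianReal 0 1) = fun s ↦ Real.exp (s ^ 2 / 2) := by
    rw [mgf_fun_id_gaussianReal]; simp
  have h0 (s : ℝ) : HasDerivAt (fun s : ℝ ↦ Real.exp (s ^ 2 / 2)) (s * Real.exp (s ^ 2 / 2)) s := by
    have h := ((hasDerivAt_pow 2 s).div_const 2).exp
    convert h using 1
    norm_num
    ring
  have h1 (s : ℝ) : HasDerivAt (fun s : ℝ ↦ s * Real.exp (s ^ 2 / 2))
      ((1 + s ^ 2) * Real.exp (s ^ 2 / 2)) s :=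
    ((hasDerivAt_id' s).fun_mul (h0 s)).congr_deriv (by ring)
  have h2 (s : ℝ) : HasDerivAt (fun s : ℝ ↦ (1 + s ^ 2) * Real.exp (s ^ 2 / 2))
      ((3 * s + s ^ 3) * Real.exp (s ^ 2 / 2)) s :=
    (((hasDerivAt_pow 2 s).const_add 1).fun_mul (h0 s)).congr_deriv (by norm_num; ring)
  have h3 : HasDerivAt (fun s : ℝ ↦ (3 * s + s ^ 3) * Real.exp (s ^ 2 / 2)) 3 0 :=
    ((((hasDerivAt_id' (0 : ℝ)).const_mul 3).fun_add (hasDerivAt_pow 3 0)).fun_mul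
      (h0 0)).congr_deriv (by simp)
  have h := iteratedDeriv_mgf_zero (X := fun y : ℝ ↦ y) (μ := gaussianReal 0 1) (by simp) 4
  rw [hmgf] at h
  simp only [iteratedDeriv_succ, iteratedDeriv_zero, funext fun s ↦ (h0 s).deriv,
    funext fun s ↦ (h1 s).deriv, funext fun s ↦ (h2 s).deriv, h3.deriv] at h
  simpa using h.symm

lemma memLp_two_norm_pow_of_isGaussian {E : Type*} [NormedAddCommGroup E] [NormedSpace ℝ E]
    [MeasurableSpace E] [BorelSpace E] [SecondCountableTopology E] [CompleteSpace E]
    (μ : Measure E) [IsGaussian μ] (k : ℕ) : MemLp (fun z ↦ ‖z‖ ^ k) 2 μ := by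
  rw [memLp_two_iff_integrable_sq (by fun_prop)]
  simpa only [← pow_mul, id_eq] using
    (IsGaussian.memLp_id μ ((k * 2 : ℕ) : ENNReal) (ENNReal.natCast_ne_top _)).integrable_norm_pow'

lemma isGaussian_pi_gaussianReal (ι : Type*) [Fintype ι] :
    IsGaussian (Measure.pi fun _ : ι ↦ gaussianReal 0 1) := by
  classical
  have h : (Measure.pi fun _ : ι ↦ gaussianReal 0 1)
      = (stdGaussian (EuclideanSpace ℝ ι)).map (EuclideanSpace.equiv ι ℝ) := by
    rw [← map_pi_eq_stdGaussian, Measure.map_map (by fun_prop) (by fun_prop)]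
    exact Measure.map_id.symm
  rw [h]
  infer_instance

lemma memLp_sq_gaussianReal : MemLp (fun y : ℝ ↦ y ^ 2) 2 (gaussianReal 0 1) := by
  simpa using memLp_two_norm_pow_of_isGaussian (gaussianReal 0 1) 2

lemma variance_sq_gaussianReal : variance (fun y : ℝ ↦ y ^ 2) (gaussianReal 0 1) = 2 := by
  have h2 : ∫ y, y ^ 2 ∂gaussianReal 0 1 = 1 := by
    have h := variance_fun_id_gaussianReal (μ := 0) (v := 1)
    rw [variance_eq_integral (by fun_prop)] at h
    simpa using h
  have h4 : ∫ y, (y ^ 2) ^ 2 ∂gaussianReal 0 1 = 3 := by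
    simpa [← pow_mul] using integral_pow_four_gaussianReal
  rw [variance_eq_sub memLp_sq_gaussianReal]
  simp only [Pi.pow_apply, h4, h2]
  norm_num

lemma Matrix.IsHermitian.trace_sq {n : Type*} [Fintype n] [DecidableEq n] {M : Matrix n n ℝ}
    (hM : M.IsHermitian) : (M ^ 2).trace = ∑ i, hM.eigenvalues i ^ 2 := by
  conv_lhs => rw [hM.spectral_theorem]
  rw [← map_pow, Unitary.conjStarAlgAut_apply, trace_mul_cycle]
  simp [diagonal_pow, trace_diagonal]

/-- The variance of the quadratic form `zᵀMz` of a standard Gaussian vector is `2 Tr[M²]`. -/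
lemma variance_quadForm {d : ℕ} {M : Matrix (Fin d) (Fin d) ℝ} (hM : M.IsHermitian) :
    variance (fun z ↦ z ⬝ᵥ M *ᵥ z) (Measure.pi fun _ : Fin d ↦ gaussianReal 0 1)
      = 2 * (M ^ 2).trace := by
  set b := hM.eigenvectorBasis
  set γ := Measure.pi fun _ : Fin d ↦ gaussianReal 0 1
  let q : EuclideanSpace ℝ (Fin d) → ℝ := fun z ↦ z.ofLp ⬝ᵥ M *ᵥ z.ofLp
  have hq : Measurable q := by
    unfold q
    simp only [dotProduct, mulVec]
    fun_prop
  have hb : Measurable (fun x : Fin d → ℝ ↦ ∑ i, x i • b i) := by fun_prop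
  have hdiag (z : Fin d → ℝ) : q (∑ i, z i • b i) = ∑ i, hM.eigenvalues i * z i ^ 2 := by
    have hMz : M *ᵥ (∑ i, z i • b i).ofLp = (∑ i, (hM.eigenvalues i * z i) • b i).ofLp := by
      simp only [WithLp.ofLp_sum, WithLp.ofLp_smul, mulVec_sum, mulVec_smul, b,
        hM.mulVec_eigenvectorBasis, smul_smul, mul_comm]
    have hin (u w : EuclideanSpace ℝ (Fin d)) : u.ofLp ⬝ᵥ w.ofLp = inner ℝ w u := by
      simp [EuclideanSpace.inner_eq_star_dotProduct]
    simp only [q, hMz, hin]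
    rw [b.orthonormal.inner_sum]
    simp; congr! 1; ring
  calc variance (fun z ↦ z ⬝ᵥ M *ᵥ z) γ
      = variance q (γ.map (WithLp.toLp 2)) := by
        rw [variance_map hq.aemeasurable (by fun_prop)]
        rfl
    _ = variance q (γ.map fun x ↦ ∑ i, x i • b i) := by
        rw [map_pi_eq_stdGaussian, stdGaussian_eq_map_pi_orthonormalBasis b]
    _ = variance (∑ i, fun z : Fin d → ℝ ↦ hM.eigenvalues i * z i ^ 2) γ := by
        rw [variance_map hq.aemeasurable hb.aemeasurable]
        congr 1
        ext z
        simp [hdiag]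
    _ = ∑ i, variance (fun y : ℝ ↦ hM.eigenvalues i * y ^ 2) (gaussianReal 0 1) :=
        variance_sum_pi (X := fun i y ↦ hM.eigenvalues i * y ^ 2)
          fun i ↦ memLp_sq_gaussianReal.const_mul _
    _ = 2 * (M ^ 2).trace := by
        simp only [variance_const_mul, variance_sq_gaussianReal, hM.trace_sq, Finset.sum_mul,
          mul_comm (2 : ℝ)]

/-- A perturbation of size `h * G` changes the variance of a square-integrable variable by at
most a constant multiple of `h`. -/
lemma abs_variance_add_sub_le {Ω : Type*} [MeasurableSpace Ω] (γ : Measure Ω)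
    [IsProbabilityMeasure γ] {Q G : Ω → ℝ} (hQ : MemLp Q 2 γ) (hG : MemLp G 2 γ) :
    ∃ C : ℝ, 0 ≤ C ∧ ∀ h : ℝ, 0 < h → h ≤ 1 → ∀ R : Ω → ℝ, AEStronglyMeasurable R γ →
      (∀ ω, |R ω| ≤ h * G ω) →
      |variance (fun ω ↦ Q ω + R ω) γ - variance Q γ| ≤ C * h := by
  have hQG : Integrable (fun ω ↦ |Q ω| * |G ω|) γ := hQ.norm.integrable_mul hG.norm
  have hQi : Integrable (fun ω ↦ |Q ω|) γ := (hQ.integrable one_le_two).norm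
  have hGi : Integrable (fun ω ↦ |G ω|) γ := (hG.integrable one_le_two).norm
  have hGG : Integrable (fun ω ↦ G ω ^ 2) γ := hG.integrable_sq
  have hQ0 : 0 ≤ ∫ ω, |Q ω| ∂γ := integral_nonneg fun ω ↦ abs_nonneg _
  have hG0 : 0 ≤ ∫ ω, |G ω| ∂γ := integral_nonneg fun ω ↦ abs_nonneg _
  have hQG0 : 0 ≤ ∫ ω, |Q ω| * |G ω| ∂γ := integral_nonneg fun ω ↦ by positivity
  have hGG0 : 0 ≤ ∫ ω, G ω ^ 2 ∂γ := integral_nonneg fun ω ↦ by positivity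
  refine ⟨2 * (∫ ω, |Q ω| * |G ω| ∂γ + (∫ ω, |Q ω| ∂γ) * ∫ ω, |G ω| ∂γ) + ∫ ω, G ω ^ 2 ∂γ,
    by positivity, fun h hh0 hh1 R hRm hRG ↦ ?_⟩
  have hR' (ω : Ω) : |R ω| ≤ h * |G ω| :=
    (hRG ω).trans (mul_le_mul_of_nonneg_left (le_abs_self _) hh0.le)
  have hR : MemLp R 2 γ := hG.of_le_mul hRm (.of_forall hR')
  have hER : |∫ ω, R ω ∂γ| ≤ h * ∫ ω, |G ω| ∂γ := by
    rw [← integral_const_mul, ← Real.norm_eq_abs]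
    exact norm_integral_le_of_norm_le (hGi.const_mul h) (.of_forall hR')
  have hEQ : |∫ ω, Q ω ∂γ| ≤ ∫ ω, |Q ω| ∂γ := abs_integral_le_integral_abs
  have hEQR : |∫ ω, (Q * R) ω ∂γ| ≤ h * ∫ ω, |Q ω| * |G ω| ∂γ := by
    rw [← integral_const_mul, ← Real.norm_eq_abs]
    refine norm_integral_le_of_norm_le (hQG.const_mul h) (.of_forall fun ω ↦ ?_)
    rw [Pi.mul_apply, Real.norm_eq_abs, abs_mul, mul_left_comm]
    exact mul_le_mul_of_nonneg_left (hR' ω) (abs_nonneg _)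
  have hcov : |covariance Q R γ| ≤
      h * (∫ ω, |Q ω| * |G ω| ∂γ + (∫ ω, |Q ω| ∂γ) * ∫ ω, |G ω| ∂γ) := by
    rw [covariance_eq_sub hQ hR]
    refine (abs_sub _ _).trans ?_
    rw [abs_mul, mul_add, mul_left_comm h]
    gcongr
  have hvar : variance R γ ≤ h * ∫ ω, G ω ^ 2 ∂γ := by
    refine (variance_le_expectation_sq hRm).trans ?_
    rw [← integral_const_mul]
    refine integral_mono hR.integrable_sq (hGG.const_mul h) fun ω ↦ ?_
    calc R ω ^ 2 = |R ω| ^ 2 := (sq_abs _).symm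
      _ ≤ (h * |G ω|) ^ 2 := by gcongr; exact hR' ω
      _ = h * h * G ω ^ 2 := by rw [mul_pow, sq_abs]; ring
      _ ≤ h * 1 * G ω ^ 2 := by gcongr
      _ = h * G ω ^ 2 := by ring
  rw [variance_fun_add hQ hR]
  have := abs_le.1 hcov
  have := variance_nonneg R γ
  rw [abs_le]
  constructor <;> linarith

lemma gaussPi_eq_map_smul (d : ℕ) {h : ℝ} (hh : 0 ≤ h) :
    gaussPi d h = (Measure.pi fun _ : Fin d ↦ gaussianReal 0 1).map (fun z ↦ √h • z) := by
  have hmap : (gaussianReal 0 1).map (fun y ↦ √h * y) = gaussianReal 0 h.toNNReal := by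
    rw [gaussianReal_map_const_mul]
    congr 1
    · simp
    · ext
      simp [hh]
  have := Measure.pi_map_pi (μ := fun _ : Fin d ↦ gaussianReal 0 1)
    (f := fun _ y ↦ √h * y) (fun _ ↦ by fun_prop)
  simp only [hmap] at this
  exact this.symm

section Taylor

variable {E : Type*} [NormedAddCommGroup E] [NormedSpace ℝ E]

lemma iteratedDeriv_comp_line {F : E → ℝ} {n : ℕ} (hF : ContDiff ℝ n F) (q w : E) (s : ℝ) :
    iteratedDeriv n (fun s : ℝ ↦ F (q + s • w)) s
      = iteratedFDeriv ℝ n F (q + s • w) (fun _ ↦ w) := by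
  have hG : ContDiff ℝ n (fun z ↦ F (q + z)) := by fun_prop
  have h := (ContinuousLinearMap.toSpanSingleton ℝ w).iteratedFDeriv_comp_right hG s le_rfl
  rw [iteratedDeriv_eq_iteratedFDeriv]
  change iteratedFDeriv ℝ n ((fun z ↦ F (q + z)) ∘ ContinuousLinearMap.toSpanSingleton ℝ w) s _ = _
  rw [h, iteratedFDeriv_comp_add_left]
  simp

lemma abs_symm_sub_iteratedDeriv_two_le {f : ℝ → ℝ} (hf : ContDiff ℝ 4 f) {B : ℝ}
    (hB : ∀ s, |iteratedDeriv 4 f s| ≤ B) :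
    |f 1 + f (-1) - 2 * f 0 - iteratedDeriv 2 f 0| ≤ B := by
  have key (y : ℝ) (hy : (0 : ℝ) ≠ y) :
      ∃ s, f y - (f 0 + y * iteratedDeriv 1 f 0 + y ^ 2 / 2 * iteratedDeriv 2 f 0
        + y ^ 3 / 6 * iteratedDeriv 3 f 0) = iteratedDeriv 4 f s * y ^ 4 / 24 := by
    obtain ⟨s, -, hs⟩ := taylor_mean_remainder_lagrange_iteratedDeriv (n := 3) hy
      (hf.contDiffOn.of_le (by norm_num))
    refine ⟨s, ?_⟩
    have hw (k : ℕ) (hk : k ≤ 4) :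
        iteratedDerivWithin k f (Set.uIcc 0 y) 0 = iteratedDeriv k f 0 :=
      iteratedDerivWithin_eq_iteratedDeriv (uniqueDiffOn_uIcc hy)
        (hf.contDiffAt.of_le (by exact_mod_cast hk)) Set.left_mem_uIcc
    rw [taylor_within_apply] at hs
    simp only [Finset.sum_range_succ, Finset.sum_range_zero] at hs
    rw [hw 0 (by norm_num), hw 1 (by norm_num), hw 2 (by norm_num), hw 3 (by norm_num)] at hs
    norm_num [Nat.factorial] at hs ⊢
    linarith
  obtain ⟨s₁, h₁⟩ := key 1 (by norm_num)
  obtain ⟨s₂, h₂⟩ := key (-1) (by norm_num)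
  have b₁ := abs_le.1 (hB s₁)
  have b₂ := abs_le.1 (hB s₂)
  rw [abs_le]
  constructor <;> linarith

/-- The second symmetric difference of a `C⁴` function agrees with its second derivative up to
a fourth-order error. -/
lemma abs_symmDiff_sub_iteratedFDeriv_two_le {F : E → ℝ} (hF : ContDiff ℝ 4 F) {B : ℝ}
    (hB : ∀ p, ‖iteratedFDeriv ℝ 4 F p‖ ≤ B) (q w : E) :
    |F (q + w) + F (q - w) - 2 * F q - iteratedFDeriv ℝ 2 F q (fun _ ↦ w)| ≤ B * ‖w‖ ^ 4 := by
  have hf : ContDiff ℝ 4 (fun s : ℝ ↦ F (q + s • w)) := by fun_prop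
  have h := abs_symm_sub_iteratedDeriv_two_le hf (B := B * ‖w‖ ^ 4) fun s ↦ by
    rw [iteratedDeriv_comp_line hF]
    refine ((iteratedFDeriv ℝ 4 F (q + s • w)).le_opNorm _).trans ?_
    simp only [Finset.prod_const, Finset.card_univ, Fintype.card_fin]
    gcongr
    exact hB _
  rw [iteratedDeriv_comp_line (hF.of_le (by norm_num))] at h
  simpa [← sub_eq_add_neg] using h

lemma abs_iteratedFDeriv_two_sub_le {F : E → ℝ} (hF : ContDiff ℝ 4 F) {B : ℝ}
    (hB : ∀ p, ‖iteratedFDeriv ℝ 3 F p‖ ≤ B) (p q w : E) :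
    |iteratedFDeriv ℝ 2 F q (fun _ ↦ w) - iteratedFDeriv ℝ 2 F p (fun _ ↦ w)|
      ≤ B * ‖q - p‖ * ‖w‖ ^ 2 := by
  have hd : Differentiable ℝ (iteratedFDeriv ℝ 2 F) :=
    hF.differentiable_iteratedFDeriv (by norm_num)
  have h := convex_univ.norm_image_sub_le_of_norm_fderiv_le (f := iteratedFDeriv ℝ 2 F)
    (fun y _ ↦ hd y) (fun y _ ↦ (norm_fderiv_iteratedFDeriv).trans_le (hB y))
    (Set.mem_univ p) (Set.mem_univ q)
  rw [← _root_.sub_apply]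
  refine ((iteratedFDeriv ℝ 2 F q - iteratedFDeriv ℝ 2 F p).le_opNorm _).trans ?_
  simp only [Finset.prod_const, Finset.card_univ, Fintype.card_fin]
  gcongr

end Taylor

section SpatialDerivatives

variable {d : ℕ} {v : ℝ → (Fin d → ℝ) → ℝ}

lemma spatialHess_apply (hv : ContDiff ℝ 4 (Function.uncurry v)) (t : ℝ) (x : Fin d → ℝ)
    (i j : Fin d) :
    spatialHess v t x i j = fderiv ℝ (fderiv ℝ (Function.uncurry v)) (t, x)
      (0, Pi.single i 1) (0, Pi.single j 1) := by
  have hincl (y : Fin d → ℝ) : HasFDerivAt (fun y : Fin d → ℝ ↦ (t, y))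
      (ContinuousLinearMap.inr ℝ ℝ (Fin d → ℝ)) y := hasFDerivAt_prodMk_right t y
  have hF : Differentiable ℝ (Function.uncurry v) := hv.differentiable (by norm_num)
  have hF' : Differentiable ℝ (fderiv ℝ (Function.uncurry v)) :=
    (hv.fderiv_right (m := 3) (by norm_num)).differentiable (by norm_num)
  have h₁ (y : Fin d → ℝ) : fderiv ℝ (v t) y (Pi.single j 1)
      = fderiv ℝ (Function.uncurry v) (t, y) (0, Pi.single j 1) := by
    have := ((hF (t, y)).hasFDerivAt.comp y (hincl y)).fderiv
    change fderiv ℝ (v t) y = _ at this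
    simp [this]
  have h₂ := (((hF' (t, x)).hasFDerivAt.comp x (hincl x)).clm_apply
    (hasFDerivAt_const ((0 : ℝ), (Pi.single j 1 : Fin d → ℝ)) x)).fderiv
  simp only [spatialHess, Matrix.of_apply, h₁]
  simp only [Function.comp_apply] at h₂
  rw [h₂]
  simp

lemma spatialHess_isHermitian (hv : ContDiff ℝ 4 (Function.uncurry v)) (t : ℝ) (x : Fin d → ℝ) :
    (spatialHess v t x).IsHermitian := by
  ext i j
  have h : IsSymmSndFDerivAt ℝ (Function.uncurry v) (t, x) :=
    hv.contDiffAt.isSymmSndFDerivAt (by simp; norm_num)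
  simp only [conjTranspose_apply, star_trivial, spatialHess_apply hv]
  exact h _ _

lemma iteratedFDeriv_two_spatial (hv : ContDiff ℝ 4 (Function.uncurry v)) (t : ℝ)
    (x y : Fin d → ℝ) :
    iteratedFDeriv ℝ 2 (Function.uncurry v) (t, x) (fun _ ↦ (0, y))
      = y ⬝ᵥ spatialHess v t x *ᵥ y := by
  have hy : ((0 : ℝ), y) = ∑ i, y i • ((0 : ℝ), (Pi.single i 1 : Fin d → ℝ)) := by
    have : y = ∑ i, y i • (Pi.single i 1 : Fin d → ℝ) := by
      simp [← Pi.single_smul, Finset.univ_sum_single]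
    ext1
    · simp [Prod.fst_sum]
    · simpa [Prod.snd_sum] using this
  rw [iteratedFDeriv_two_apply]
  simp only [dotProduct, mulVec, spatialHess_apply hv]
  conv_lhs => rw [hy]
  simp only [map_sum, _root_.sum_apply, map_smul, _root_.smul_apply, smul_eq_mul, Finset.mul_sum]
  rw [Finset.sum_comm]
  refine Finset.sum_congr rfl fun i _ ↦ Finset.sum_congr rfl fun j _ ↦ ?_
  ring

/-- After rescaling the increment, the residual error is a constant plus half the quadratic form
of `σᵀ∇²vσ`, up to an error of order `Δt`. -/
lemma exists_resErr_smul_eq (hv : ContDiff ℝ 4 (Function.uncurry v))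
    (hbd : ∀ i : ℕ, i ≤ 4 → ∃ B : ℝ, ∀ p : ℝ × (Fin d → ℝ),
      ‖iteratedFDeriv ℝ i (Function.uncurry v) p‖ ≤ B)
    (t : ℝ) (x μv : Fin d → ℝ) (σ : Matrix (Fin d) (Fin d) ℝ) :
    ∃ a b : ℝ, ∀ h : ℝ, 0 < h → ∃ c : ℝ, ∀ z : Fin d → ℝ,
      |resErr v μv σ t x h (√h • z) - c
          - (1 / 2) * (z ⬝ᵥ (σᵀ * spatialHess v t x * σ) *ᵥ z)|
        ≤ h * (a * ‖z‖ ^ 2 + b * ‖z‖ ^ 4) := by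
  obtain ⟨B₃, hB₃⟩ := hbd 3 (by norm_num)
  obtain ⟨B₄, hB₄⟩ := hbd 4 le_rfl
  have hB₃0 : 0 ≤ B₃ := (norm_nonneg _).trans (hB₃ 0)
  have hB₄0 : 0 ≤ B₄ := (norm_nonneg _).trans (hB₄ 0)
  set F := Function.uncurry v
  set S := ‖LinearMap.toContinuousLinearMap σ.mulVecLin‖
  have hS (z : Fin d → ℝ) : ‖σ *ᵥ z‖ ≤ S * ‖z‖ :=
    (LinearMap.toContinuousLinearMap σ.mulVecLin).le_opNorm z
  set m := ‖((1 : ℝ), μv)‖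
  refine ⟨B₃ * m * S ^ 2, B₄ * S ^ 4, fun h hh ↦ ?_⟩
  set q : ℝ × (Fin d → ℝ) := (t + h, x + h • μv)
  refine ⟨(F q - F (t, x)) / h - (partialT v t x + (1 / 2) * (σ * σᵀ * spatialHess v t x).trace
    + μv ⬝ᵥ spatialGrad v t x), fun z ↦ ?_⟩
  set w : ℝ × (Fin d → ℝ) := (0, σ *ᵥ (√h • z))
  have hqp : ‖q - (t, x)‖ = h * m := by
    have : q - (t, x) = h • ((1 : ℝ), μv) := by ext <;> simp [q]
    rw [this, norm_smul, Real.norm_of_nonneg hh.le]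
  have hw : ‖w‖ ≤ √h * (S * ‖z‖) := by
    have : w = √h • ((0 : ℝ), σ *ᵥ z) := by ext <;> simp [w, mulVec_smul]
    rw [this, norm_smul, Real.norm_of_nonneg (Real.sqrt_nonneg h)]
    gcongr
    simpa [Prod.norm_def] using hS z
  have hsq : √h ^ 2 = h := Real.sq_sqrt hh.le
  have hw2 : ‖w‖ ^ 2 ≤ h * (S ^ 2 * ‖z‖ ^ 2) := by
    calc ‖w‖ ^ 2 ≤ (√h * (S * ‖z‖)) ^ 2 := by gcongr
      _ = √h ^ 2 * (S ^ 2 * ‖z‖ ^ 2) := by ring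
      _ = _ := by rw [hsq]
  have hw4 : ‖w‖ ^ 4 ≤ h ^ 2 * (S ^ 4 * ‖z‖ ^ 4) := by
    calc ‖w‖ ^ 4 ≤ (√h * (S * ‖z‖)) ^ 4 := by gcongr
      _ = (√h ^ 2) ^ 2 * (S ^ 4 * ‖z‖ ^ 4) := by ring
      _ = _ := by rw [hsq]
  have hD2 : iteratedFDeriv ℝ 2 F (t, x) (fun _ ↦ w)
      = h * (z ⬝ᵥ (σᵀ * spatialHess v t x * σ) *ᵥ z) := by
    rw [iteratedFDeriv_two_spatial hv, mulVec_smul, mulVec_smul, smul_dotProduct,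
      dotProduct_smul, smul_smul, ← sq, hsq, ← mulVec_mulVec, ← mulVec_mulVec,
      dotProduct_mulVec z, vecMul_transpose, smul_eq_mul]
  have hres : resErr v μv σ t x h (√h • z) - ((F q - F (t, x)) / h
        - (partialT v t x + (1 / 2) * (σ * σᵀ * spatialHess v t x).trace
          + μv ⬝ᵥ spatialGrad v t x))
        - (1 / 2) * (z ⬝ᵥ (σᵀ * spatialHess v t x * σ) *ᵥ z)
      = ((F (q + w) + F (q - w) - 2 * F q - iteratedFDeriv ℝ 2 F q (fun _ ↦ w))
        + (iteratedFDeriv ℝ 2 F q (fun _ ↦ w) - iteratedFDeriv ℝ 2 F (t, x) (fun _ ↦ w)))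
        / (2 * h) := by
    rw [hD2]
    simp only [resErr, F, q, w, Prod.mk_add_mk, Prod.mk_sub_mk, Function.uncurry_apply_pair,
      add_zero, sub_zero]
    field_simp
    ring
  rw [hres, abs_div, abs_of_pos (by positivity : 0 < 2 * h), div_le_iff₀ (by positivity)]
  have h₁ := abs_symmDiff_sub_iteratedFDeriv_two_le hv hB₄ q w
  have h₂ := abs_iteratedFDeriv_two_sub_le hv hB₃ (t, x) q w
  rw [hqp] at h₂
  have hm : 0 ≤ m := norm_nonneg _
  have h₁' : B₄ * ‖w‖ ^ 4 ≤ B₄ * (h ^ 2 * (S ^ 4 * ‖z‖ ^ 4)) := by gcongr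
  have h₂' : B₃ * (h * m) * ‖w‖ ^ 2 ≤ B₃ * (h * m) * (h * (S ^ 2 * ‖z‖ ^ 2)) := by gcongr
  have hnn : 0 ≤ h * (B₃ * m * S ^ 2 * ‖z‖ ^ 2 + B₄ * S ^ 4 * ‖z‖ ^ 4) * h := by positivity
  refine (abs_add_le _ _).trans ?_
  linarith

end SpatialDerivatives

/-- `Var(ε(Δt)) → ½·Tr[(σᵀ∇²v(t,x)σ)²]` as `Δt → 0⁺`, quantitatively: there is `C ≥ 0`
with `|Var(ε(Δt)) − ½·Tr[(σᵀ∇²v(t,x)σ)²]| ≤ C·Δt` for all `Δt ∈ (0,1]`. -/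
theorem stmt2 {d : ℕ} (hd : 1 ≤ d) (t : ℝ) (x μv : Fin d → ℝ) (σ : Matrix (Fin d) (Fin d) ℝ)
    (v : ℝ → (Fin d → ℝ) → ℝ) (hv : ContDiff ℝ 4 (Function.uncurry v))
    (hbd : ∀ i : ℕ, i ≤ 4 → ∃ B : ℝ, ∀ p : ℝ × (Fin d → ℝ),
      ‖iteratedFDeriv ℝ i (Function.uncurry v) p‖ ≤ B) :
    ∃ C : ℝ, 0 ≤ C ∧ ∀ Δt : ℝ, 0 < Δt → Δt ≤ 1 →
      |variance (resErr v μv σ t x Δt) (gaussPi d Δt)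
          - (1 / 2) * (((σᵀ * spatialHess v t x * σ) ^ 2).trace)| ≤ C * Δt := by
  obtain ⟨a, b, hab⟩ := exists_resErr_smul_eq hv hbd t x μv σ
  set M := σᵀ * spatialHess v t x * σ
  set γ := Measure.pi fun _ : Fin d ↦ gaussianReal 0 1
  have hγ : IsGaussian γ := isGaussian_pi_gaussianReal (Fin d)
  have hM : M.IsHermitian := by
    simpa [M] using isHermitian_conjTranspose_mul_mul σ (spatialHess_isHermitian hv t x)
  have hvc : Continuous (Function.uncurry v) := hv.continuous
  have hcont (h : ℝ) : Continuous (resErr v μv σ t x h) := by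
    unfold resErr
    have hc (y : (Fin d → ℝ) → Fin d → ℝ) (hy : Continuous y) :
        Continuous fun η ↦ v (t + h) (y η) := hvc.comp (continuous_const.prodMk hy)
    refine ((((hc _ ?_).add (hc _ ?_)).sub continuous_const).div_const _).sub continuous_const <;>
      fun_prop
  have hQc : Continuous fun z : Fin d → ℝ ↦ (1 / 2) * (z ⬝ᵥ M *ᵥ z) := by fun_prop
  have hG : MemLp (fun z : Fin d → ℝ ↦ a * ‖z‖ ^ 2 + b * ‖z‖ ^ 4) 2 γ :=
    ((memLp_two_norm_pow_of_isGaussian γ 2).const_mul a).add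
      ((memLp_two_norm_pow_of_isGaussian γ 4).const_mul b)
  have hQ : MemLp (fun z : Fin d → ℝ ↦ (1 / 2) * (z ⬝ᵥ M *ᵥ z)) 2 γ := by
    refine (MemLp.of_le_mul (c := d * ‖LinearMap.toContinuousLinearMap M.mulVecLin‖)
      (memLp_two_norm_pow_of_isGaussian γ 2) (by fun_prop) (.of_forall fun z ↦ ?_)).const_mul _
    have hMz : ‖M *ᵥ z‖ ≤ ‖LinearMap.toContinuousLinearMap M.mulVecLin‖ * ‖z‖ :=
      (LinearMap.toContinuousLinearMap M.mulVecLin).le_opNorm z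
    calc ‖z ⬝ᵥ M *ᵥ z‖ ≤ ∑ i, ‖z i * (M *ᵥ z) i‖ := norm_sum_le _ _
      _ ≤ ∑ _i : Fin d, ‖z‖ * (‖LinearMap.toContinuousLinearMap M.mulVecLin‖ * ‖z‖) := by
          refine Finset.sum_le_sum fun i _ ↦ ?_
          rw [norm_mul]
          gcongr
          · exact norm_le_pi_norm z i
          · exact (norm_le_pi_norm _ i).trans hMz
      _ = _ := by simp; ring
  obtain ⟨C, hC0, hC⟩ := abs_variance_add_sub_le γ hQ hG
  refine ⟨C, hC0, fun h hh0 hh1 ↦ ?_⟩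
  obtain ⟨c, hc⟩ := hab h hh0
  have hscale : Continuous fun z : Fin d → ℝ ↦ resErr v μv σ t x h (√h • z) :=
    (hcont h).comp (by fun_prop)
  have key := hC h hh0 hh1 _ (((hscale.sub continuous_const).sub hQc).aestronglyMeasurable) hc
  have hvar : variance (resErr v μv σ t x h) (gaussPi d h)
      = variance (fun z : Fin d → ℝ ↦ resErr v μv σ t x h (√h • z) - c) γ := by
    rw [gaussPi_eq_map_smul d hh0.le, variance_map (hcont h).aemeasurable (by fun_prop),
      variance_sub_const hscale.aestronglyMeasurable]
    rfl
  rw [variance_const_mul, variance_quadForm hM] at key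
  simp only [Pi.sub_apply, add_sub_cancel] at key
  rw [← hvar] at key
  convert key using 3
  ring
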